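/- (Weak-strong uniqueness for capillary fluids, classical form.) Let ν > 0, κ > 0, γ > 1, T > 0 and c > 0. Suppose (ρ₁, u₁) and (ρ₂, u₂) are two pairs of smooth (C^∞) functions on [0,T] × ℝ³ (with values in ℝ and ℝ³ respectively), ℤ³-periodic in the space variable, with ρᵢ ≥ c everywhere, each satisfying pointwise on (0,T) × ℝ³ the Navier–Stokes–Korteweg system ∂_t ρ + div(ρ u) = 0 and ∂_t(ρ u) + div(ρ u ⊗ u) + ∇(ρ^γ) − 2ν div(ρ Du) − 2κ² ρ ∇(Δρ) = 0, and with the same initial data: ρ₁(0,·) = ρ₂(0,·) and u₁(0,·) = u₂(0,·). Then ρ₁ = ρ₂ and u₁ = u₂ on [0,T] × ℝ³. -/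

import Mathlib

open scoped BigOperators
open MeasureTheory

noncomputable section

/-- Points of `ℝ³`, realized as `Fin 3 → ℝ`. -/
abbrev V3 : Type := Fin 3 → ℝ

/-- Partial derivative `∂ᵢ f` of a scalar field. -/
def pd (i : Fin 3) (f : V3 → ℝ) (x : V3) : ℝ := fderiv ℝ f x (Pi.single i 1)

/-- Gradient `∇f` of a scalar field. -/
def grad (f : V3 → ℝ) (x : V3) : V3 := fun i => pd i f x

/-- Divergence `div u` of a vector field. -/
def vdiv (u : V3 → V3) (x : V3) : ℝ := ∑ i, pd i (fun y => u y i) x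

/-- Laplacian `Δf` of a scalar field. -/
def lap (f : V3 → ℝ) (x : V3) : ℝ := ∑ i, pd i (fun y => pd i f y) x

/-- Divergence (row-wise) of a matrix field: `(div M)_i = ∑_j ∂_j M_{ij}`. -/
def mdiv (M : V3 → Fin 3 → Fin 3 → ℝ) (x : V3) : V3 :=
  fun i => ∑ j, pd j (fun y => M y i j) x

/-- Jacobian matrix `(∇u)_{ij} = ∂_j u_i` of a vector field. -/
def jacb (u : V3 → V3) (x : V3) : Fin 3 → Fin 3 → ℝ := fun i j => pd j (fun y => u y i) x

/-- Symmetric part `Du = (∇u + ∇ᵀu)/2` of the Jacobian. -/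
def symJ (u : V3 → V3) (x : V3) : Fin 3 → Fin 3 → ℝ :=
  fun i j => (jacb u x i j + jacb u x j i) / 2

/-- Antisymmetric part `Au = (∇u − ∇ᵀu)/2` of the Jacobian. -/
def asymJ (u : V3 → V3) (x : V3) : Fin 3 → Fin 3 → ℝ :=
  fun i j => (jacb u x i j - jacb u x j i) / 2

/-- Euclidean dot product on `ℝ³`. -/
def dot (a b : V3) : ℝ := ∑ i, a i * b i

/-- Squared Euclidean norm on `ℝ³`. -/
def normSq (a : V3) : ℝ := ∑ i, (a i) ^ 2


open scoped ContDiff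

/-- Smooth space-periodic functions on space-time. -/
def Sm : Subalgebra ℝ (ℝ × V3 → ℝ) where
  carrier := {f | ContDiff ℝ ∞ f ∧ ∀ t x (k : Fin 3 → ℤ), f (t, x + fun i => (k i : ℝ)) = f (t, x)}
  mul_mem' := by
    rintro a b ⟨ha, ha'⟩ ⟨hb, hb'⟩
    refine ⟨ha.mul hb, fun t x k => ?_⟩
    simp [ha', hb']
  add_mem' := by
    rintro a b ⟨ha, ha'⟩ ⟨hb, hb'⟩
    refine ⟨ha.add hb, fun t x k => ?_⟩
    simp [ha', hb']
  algebraMap_mem' := by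
    intro r
    refine ⟨contDiff_const, fun t x k => ?_⟩
    rfl

lemma Sm_smooth (f : Sm) : ContDiff ℝ ∞ f.1 := f.2.1

lemma Sm_diff (f : Sm) : Differentiable ℝ f.1 := (Sm_smooth f).differentiable (by simp)

lemma Sm_cont (f : Sm) : Continuous f.1 := (Sm_smooth f).continuous

def ddf (v : ℝ × V3) (f : Sm) : Sm :=
  ⟨fun p => fderiv ℝ f.1 p v, by
    refine ⟨?_, fun t x k => ?_⟩
    · have := (Sm_smooth f).fderiv_right (m := ∞) (by simp)
      exact this.clm_apply contDiff_const
    · have h : f.1 = fun p => f.1 (p + (0, fun i => (k i : ℝ))) := by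
        funext p
        have := f.2.2 p.1 p.2 k
        simpa [Prod.add_def] using this.symm
      have h2 : fderiv ℝ f.1 (t, x) = fderiv ℝ f.1 ((t, x) + (0, fun i => (k i : ℝ))) := by
        conv_lhs => rw [h]
        rw [fderiv_comp_add_right]
      simp only [h2]
      simp⟩

/-- Directional derivative as a derivation. -/
def dd (v : ℝ × V3) : Derivation ℝ Sm Sm :=
  Derivation.mk'
    { toFun := ddf v
      map_add' := by
        intro f g
        ext p
        show fderiv ℝ (f.1 + g.1) p v = fderiv ℝ f.1 p v + fderiv ℝ g.1 p v
        rw [fderiv_add (Sm_diff f p) (Sm_diff g p)]; rfl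
      map_smul' := by
        intro c f
        ext p
        show fderiv ℝ (c • f.1) p v = c • fderiv ℝ f.1 p v
        rw [fderiv_const_smul (Sm_diff f p)]; rfl }
    (by
      intro f g
      ext p
      show fderiv ℝ (f.1 * g.1) p v = f.1 p * fderiv ℝ g.1 p v + g.1 p * fderiv ℝ f.1 p v
      rw [fderiv_mul (Sm_diff f p) (Sm_diff g p)]; simp)

lemma dd_apply (v : ℝ × V3) (f : Sm) (p : ℝ × V3) : (dd v f).1 p = fderiv ℝ f.1 p v := rfl

lemma dd_comm (v w : ℝ × V3) (f : Sm) : dd v (dd w f) = dd w (dd v f) := by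
  ext p
  have hd : DifferentiableAt ℝ (fderiv ℝ f.1) p :=
    ((Sm_smooth f).fderiv_right (m := ∞) (by simp)).differentiable (by simp) p
  have key : ∀ v w : ℝ × V3, (dd v (dd w f)).1 p = fderiv ℝ (fderiv ℝ f.1) p v w := by
    intro v w
    show fderiv ℝ (fun q => fderiv ℝ f.1 q w) p v = _
    rw [fderiv_clm_apply hd (differentiableAt_const _)]
    simp
  rw [key, key]
  have := ((Sm_smooth f).contDiffAt (x := p)).isSymmSndFDerivAt (by simp only [minSmoothness_of_isRCLikeNormedField]; exact WithTop.coe_le_coe.2 (le_top : (2 : ℕ∞) ≤ ⊤))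
  exact this.eq v w

def dt : Derivation ℝ Sm Sm := dd (1, 0)
def dx (i : Fin 3) : Derivation ℝ Sm Sm := dd (0, Pi.single i 1)

lemma dt_dx (i : Fin 3) (f : Sm) : dt (dx i f) = dx i (dt f) := dd_comm _ _ _
lemma dx_dx (i j : Fin 3) (f : Sm) : dx i (dx j f) = dx j (dx i f) := dd_comm _ _ _

lemma dt_hasDerivAt (f : Sm) (t : ℝ) (x : V3) :
    HasDerivAt (fun s => f.1 (s, x)) ((dt f).1 (t, x)) t := by
  have h := (Sm_diff f (t, x)).hasFDerivAt
  have h2 : HasDerivAt (fun s : ℝ => (s, x)) ((1 : ℝ), (0 : V3)) t :=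
    (hasDerivAt_id t).prodMk (hasDerivAt_const t x)
  exact h.comp_hasDerivAt t h2

lemma dx_hasFDerivAt (f : Sm) (t : ℝ) (x : V3) :
    HasFDerivAt (fun y => f.1 (t, y)) ((fderiv ℝ f.1 (t, x)).comp (ContinuousLinearMap.inr ℝ ℝ V3)) x := by
  have h := (Sm_diff f (t, x)).hasFDerivAt
  have h2 : HasFDerivAt (fun y : V3 => (t, y)) (ContinuousLinearMap.inr ℝ ℝ V3) x :=
    hasFDerivAt_prodMk_right t x
  exact h.comp x h2

lemma dx_pd (i : Fin 3) (f : Sm) (t : ℝ) (x : V3) :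
    pd i (fun y => f.1 (t, y)) x = (dx i f).1 (t, x) := by
  unfold pd
  rw [(dx_hasFDerivAt f t x).fderiv]
  simp [dx, dd_apply]

lemma dt_deriv (f : Sm) (t : ℝ) (x : V3) :
    deriv (fun s => f.1 (s, x)) t = (dt f).1 (t, x) := (dt_hasDerivAt f t x).deriv

lemma slice_cont (f : Sm) (t : ℝ) : Continuous (fun x => f.1 (t, x)) :=
  (Sm_cont f).comp (by fun_prop)

lemma slice_int (f : Sm) (t : ℝ) :
    IntegrableOn (fun x => f.1 (t, x)) (Set.Icc (0 : V3) 1) :=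
  (slice_cont f t).continuousOn.integrableOn_compact isCompact_Icc

lemma div_int (F : Fin 3 → Sm) (t : ℝ) :
    ∫ x in Set.Icc (0 : V3) 1, (∑ j, dx j (F j)).1 (t, x) = 0 := by
  have h := integral_divergence_of_hasFDerivAt_off_countable' (n := 2) (E := ℝ) (0 : V3) 1
    (by intro i; simp) (fun i x => (F i).1 (t, x))
    (fun i x => (fderiv ℝ (F i).1 (t, x)).comp (ContinuousLinearMap.inr ℝ ℝ V3)) ∅
    Set.countable_empty (fun i => (slice_cont (F i) t).continuousOn)
    (fun x _ i => dx_hasFDerivAt (F i) t x)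
  have e : ∀ x : V3, (∑ j, dx j (F j)).1 (t, x) = ∑ i, ((fderiv ℝ (F i).1 (t, x)).comp
      (ContinuousLinearMap.inr ℝ ℝ V3)) (Pi.single i 1) := by
    intro x
    simp [dx, dd_apply, Fin.sum_univ_three]
  simp only [← e] at h
  rw [h (slice_int _ t)]
  apply Finset.sum_eq_zero
  intro i _
  rw [sub_eq_zero]
  congr 1
  funext x
  have := (F i).2.2 t (i.insertNth ((0 : V3) i) x) (Pi.single i 1)
  rw [← this]
  have hh : (i.insertNth ((1 : V3) i) x : V3) =
      (i.insertNth ((0 : V3) i) x : V3) + fun j => (((Pi.single i 1 : Fin 3 → ℤ) j : ℤ) : ℝ) := by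
    funext j
    refine Fin.succAboveCases i ?_ (fun k => ?_) j
    · simp
    · simp
  rw [hh]

lemma energy_deriv (e : Sm) (t : ℝ) :
    HasDerivAt (fun s => ∫ x in Set.Icc (0 : V3) 1, e.1 (s, x))
      (∫ x in Set.Icc (0 : V3) 1, (dt e).1 (t, x)) t := by
  obtain ⟨M, hM⟩ := ((isCompact_Icc (a := t - 1) (b := t + 1)).prod
    (isCompact_Icc (a := (0 : V3)) (b := 1))).exists_bound_of_continuousOn
      (Sm_cont (dt e)).continuousOn
  refine (hasDerivAt_integral_of_dominated_loc_of_deriv_le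
    (μ := volume.restrict (Set.Icc (0 : V3) 1)) (F := fun s x => e.1 (s, x)) (s := Set.Icc (t - 1) (t + 1))
    (F' := fun s x => (dt e).1 (s, x)) (bound := fun _ => M)
    (Icc_mem_nhds (by linarith) (by linarith)) ?_ (slice_int e t) ?_ ?_ ?_ ?_).2
  · exact Filter.Eventually.of_forall fun s => (slice_int e s).aestronglyMeasurable
  · exact (slice_int (dt e) t).aestronglyMeasurable
  · refine (ae_restrict_iff' measurableSet_Icc).2 (Filter.Eventually.of_forall ?_)
    intro x hx s hs
    exact hM (s, x) ⟨hs, hx⟩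
  · exact continuous_const.continuousOn.integrableOn_compact isCompact_Icc
  · exact Filter.Eventually.of_forall fun x s _ => dt_hasDerivAt e s x

lemma energy_zero (T C : ℝ) (hT : 0 < T) (e : Sm) (F : Fin 3 → Sm)
    (hnn : ∀ t ∈ Set.Icc 0 T, ∀ x, 0 ≤ e.1 (t, x))
    (h0 : ∀ x, e.1 (0, x) = 0)
    (hle : ∀ t ∈ Set.Ioo 0 T, ∀ x ∈ Set.Icc (0 : V3) 1,
      (dt e).1 (t, x) ≤ (∑ j, dx j (F j)).1 (t, x) + C * e.1 (t, x)) :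
    ∀ t ∈ Set.Icc 0 T, ∀ x ∈ Set.Icc (0 : V3) 1, e.1 (t, x) = 0 := by
  set E : ℝ → ℝ := fun s => ∫ x in Set.Icc (0 : V3) 1, e.1 (s, x) with hE
  have hE0 : E 0 = 0 := by simp [hE, h0]
  have hEd : ∀ t ∈ Set.Ioo 0 T, (∫ x in Set.Icc (0 : V3) 1, (dt e).1 (t, x)) ≤ C * E t := by
    intro t ht
    have h1 : (∫ x in Set.Icc (0 : V3) 1, (dt e).1 (t, x)) ≤
        ∫ x in Set.Icc (0 : V3) 1, ((∑ j, dx j (F j)).1 (t, x) + C * e.1 (t, x)) :=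
      setIntegral_mono_on (slice_int _ t) ((slice_int _ t).add ((slice_int e t).const_mul C))
        measurableSet_Icc (hle t ht)
    rw [integral_add (slice_int _ t) ((slice_int e t).const_mul C), div_int,
      integral_const_mul, zero_add] at h1
    exact h1
  have hder : ∀ t, HasDerivAt (fun s => E s * Real.exp (-C * s))
      ((∫ x in Set.Icc (0 : V3) 1, (dt e).1 (t, x)) * Real.exp (-C * t)
        + E t * (Real.exp (-C * t) * (-C * 1))) t := by
    intro t
    exact (energy_deriv e t).mul (((hasDerivAt_id t).const_mul (-C)).exp)
  have hanti : AntitoneOn (fun s => E s * Real.exp (-C * s)) (Set.Icc 0 T) := by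
    apply antitoneOn_of_deriv_nonpos (convex_Icc 0 T)
    · exact fun t _ => (hder t).continuousAt.continuousWithinAt
    · exact fun t _ => (hder t).differentiableAt.differentiableWithinAt
    · intro t ht
      rw [interior_Icc] at ht
      rw [(hder t).deriv]
      have := hEd t ht
      nlinarith [Real.exp_pos (-C * t)]
  intro t ht
  have hEt : E t ≤ 0 := by
    have := hanti (Set.left_mem_Icc.2 hT.le) ht ht.1
    simp only [hE0, zero_mul] at this
    exact nonpos_of_mul_nonpos_left this (Real.exp_pos _)
  have hEn : 0 ≤ E t := integral_nonneg (fun x => hnn t ht x)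
  have hz : E t = 0 := le_antisymm hEt hEn
  have hae := (setIntegral_eq_zero_iff_of_nonneg_ae
    (Filter.Eventually.of_forall fun x => hnn t ht x) (slice_int e t)).1 hz
  have := Measure.eqOn_of_ae_eq hae (slice_cont e t).continuousOn continuousOn_const
    (by
      rw [← Set.pi_univ_Icc, interior_pi_set Set.finite_univ, closure_pi_set]
      intro x hx i _
      have := hx i trivial
      simpa [interior_Icc, closure_Ioo] using this)
  exact fun x hx => this hx

section alg
variable (ρ r : Sm) (u w v : Fin 3 → Sm)

lemma I1 : dt (ρ * ∑ i, w i * w i) + ∑ j, dx j (ρ * u j * ∑ i, w i * w i)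
    = (dt ρ + ∑ j, dx j (ρ * u j)) * (∑ i, w i * w i)
      + 2 * ∑ i, w i * (ρ * (dt (w i) + ∑ j, u j * dx j (w i))) := by
  simp only [Fin.sum_univ_three, map_add, Derivation.leibniz, smul_eq_mul]
  ring

lemma I2 : 2 * ∑ j, dx j (ρ * ∑ i, w i * (dx j (w i) + dx i (w j)))
    = 2 * ∑ i, w i * ∑ j, (dx j ρ * (dx j (w i) + dx i (w j)) +
        ρ * dx j (dx j (w i) + dx i (w j)))
      + ρ * ∑ i, ∑ j, (dx j (w i) + dx i (w j)) ^ 2 := by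
  simp only [Fin.sum_univ_three, map_add, Derivation.leibniz, smul_eq_mul]
  ring

lemma I3 (L G : Sm) (hL : L = ∑ j, dx j (dx j r)) (hG : G = ∑ j, dx j (ρ * w j)) :
    ∑ j, dx j (ρ * w j * L - dx j r * G)
    = (∑ j, w j * (ρ * dx j L)) - ∑ j, dx j r * dx j G := by
  have : ∑ j, dx j (ρ * w j * L - dx j r * G)
    = (∑ j, w j * (ρ * dx j L)) - (∑ j, dx j r * dx j G)
      + L * (∑ j, dx j (ρ * w j)) - G * ∑ j, dx j (dx j r) := by
    simp only [Fin.sum_univ_three, map_sub, Derivation.leibniz, smul_eq_mul]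
    ring
  rw [this, ← hL, ← hG]; ring

lemma I5 : dt (∑ i, dx i r * dx i r) = 2 * ∑ i, dx i r * dx i (dt r) := by
  simp only [Fin.sum_univ_three, map_add, Derivation.leibniz, smul_eq_mul, dt_dx]
  ring

lemma I5b : ∑ j, dx j ((∑ i, dx i r * dx i r) * v j) =
    2 * (∑ i, dx i r * dx i (∑ j, dx j (r * v j)))
    - 2 * (∑ i, ∑ j, dx i r * dx j r * dx i (v j))
    - (∑ i, dx i r * dx i r) * (∑ j, dx j (v j))
    - 2 * ∑ i, ∑ j, r * dx i r * dx i (dx j (v j)) := by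
  simp only [Fin.sum_univ_three, map_add, Derivation.leibniz, smul_eq_mul]
  rw [dx_dx 1 0, dx_dx 2 0, dx_dx 2 1]
  ring

lemma I6 : ∑ j, dx j (r * ρ * w j) = r * (∑ j, dx j (ρ * w j)) + ρ * ∑ j, dx j r * w j := by
  simp only [Fin.sum_univ_three, Derivation.leibniz, smul_eq_mul]
  ring

lemma I7 : dt (r * r) = 2 * r * dt r := by
  simp only [Derivation.leibniz, smul_eq_mul]
  ring
end alg

/-- Evaluation at a space-time point. -/
def ev (p : ℝ × V3) (f : Sm) : ℝ := f.1 p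

lemma ev_add (p) (f g : Sm) : ev p (f + g) = ev p f + ev p g := rfl
lemma ev_sub (p) (f g : Sm) : ev p (f - g) = ev p f - ev p g := rfl
lemma ev_neg (p) (f : Sm) : ev p (-f) = - ev p f := rfl
lemma ev_mul (p) (f g : Sm) : ev p (f * g) = ev p f * ev p g := rfl
lemma ev_pow (p) (f : Sm) (n : ℕ) : ev p (f ^ n) = ev p f ^ n := rfl
lemma ev_smul (p) (c : ℝ) (g : Sm) : ev p (c • g) = c * ev p g := rfl
lemma ev_two (p) : ev p 2 = 2 := rfl
lemma ev_sum (p) (f : Fin 3 → Sm) : ev p (∑ i, f i) = ∑ i, ev p (f i) := by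
  simp only [Fin.sum_univ_three, ev_add]

lemma dx_congr (f g : Sm) (t : ℝ) (h : ∀ x, ev (t, x) f = ev (t, x) g) (i : Fin 3) (x : V3) :
    ev (t, x) (dx i f) = ev (t, x) (dx i g) := by
  have : (fun y => f.1 (t, y)) = fun y => g.1 (t, y) := funext h
  unfold ev
  rw [← dx_pd, ← dx_pd, this]

lemma flux_lin (ν κ : ℝ) (A1 A2 A3 A5 A6 : Fin 3 → Sm) :
    ∑ j, dx j (-((1/2 : ℝ) • A1 j) + ν • A2 j + (2 * κ ^ 2) • A3 j - κ ^ 2 • A5 j - A6 j)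
    = -((1/2 : ℝ) • ∑ j, dx j (A1 j)) + ν • (∑ j, dx j (A2 j))
      + (2 * κ ^ 2) • (∑ j, dx j (A3 j)) - κ ^ 2 • (∑ j, dx j (A5 j)) - ∑ j, dx j (A6 j) := by
  simp only [map_add, map_sub, map_neg, Derivation.map_smul, Finset.sum_add_distrib,
    Finset.sum_sub_distrib, Finset.smul_sum, Finset.sum_neg_distrib]

open Asymptotics Filter

lemma bigO_one (K : Set (ℝ × V3)) (hK : IsCompact K) (f : Sm) :
    (fun p => ev p f) =O[𝓟 K] (fun _ => (1 : ℝ)) := by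
  obtain ⟨M, hM⟩ := hK.exists_bound_of_continuousOn (Sm_cont f).continuousOn
  rw [isBigO_principal]
  exact ⟨M, fun p hp => by simpa [ev] using hM p hp⟩

lemma one_mul_bigO {l : Filter (ℝ × V3)} {a x n : ℝ × V3 → ℝ}
    (ha : a =O[l] (fun _ => (1 : ℝ))) (hx : x =O[l] n) : (fun p => a p * x p) =O[l] n := by
  simpa using ha.mul hx

lemma mul_one_bigO {l : Filter (ℝ × V3)} {a x n : ℝ × V3 → ℝ}
    (hx : x =O[l] n) (ha : a =O[l] (fun _ => (1 : ℝ))) : (fun p => x p * a p) =O[l] n := by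
  simpa using hx.mul ha

lemma pow_lip (γ c M : ℝ) (hc : 0 < c) :
    ∃ B : ℝ, ∀ a ∈ Set.Icc c M, ∀ b ∈ Set.Icc c M,
      |γ * a ^ (γ - 2) - γ * b ^ (γ - 2)| ≤ B * |a - b| := by
  have hd : ∀ x ∈ Set.Icc c M, HasDerivWithinAt (fun x : ℝ => γ * x ^ (γ - 2))
      (γ * ((γ - 2) * x ^ (γ - 2 - 1))) (Set.Icc c M) x := by
    intro x hx
    exact ((Real.hasDerivAt_rpow_const (Or.inl (by linarith [hx.1] : (0:ℝ) < x).ne')).const_mul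
      γ).hasDerivWithinAt
  have hcont : ContinuousOn (fun x : ℝ => γ * ((γ - 2) * x ^ (γ - 2 - 1))) (Set.Icc c M) := by
    apply ContinuousOn.mul continuousOn_const
    apply ContinuousOn.mul continuousOn_const
    apply ContinuousOn.rpow_const continuousOn_id
    intro x hx
    exact Or.inl (by have := hx.1; simp; linarith)
  obtain ⟨B, hB⟩ := isCompact_Icc.exists_bound_of_continuousOn hcont
  refine ⟨B, fun a ha b hb => ?_⟩
  exact (convex_Icc c M).norm_image_sub_le_of_norm_hasDerivWithin_le hd hB hb ha

section core
variable (ν κ γ : ℝ) (R1 R2 : Sm) (U1 U2 : Fin 3 → Sm)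

/-- Twice the symmetric gradient. -/
def SS (w : Fin 3 → Sm) (i j : Fin 3) : Sm := dx j (w i) + dx i (w j)

def KK (p : ℝ × V3) : ℝ :=
  (γ * ev p R1 ^ (γ - 2) - γ * ev p R2 ^ (γ - 2)) / (ev p R1 - ev p R2)

/-- Momentum equation, in velocity form. -/
def MomV (R : Sm) (U : Fin 3 → Sm) (p : ℝ × V3) : Prop := ∀ i,
  ev p (dt (U i)) + (∑ j, ev p (U j) * ev p (dx j (U i)))
    + γ * ev p R ^ (γ - 2) * ev p (dx i R)
    - ν * (∑ j, (ev p (dx j R) / ev p R * ev p (SS U i j) + ev p (dx j (SS U i j))))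
    - 2 * κ ^ 2 * ev p (dx i (∑ j, dx j (dx j R))) = 0

def St (i : Fin 3) (p : ℝ × V3) : ℝ :=
  - (ev p R1 * ∑ j, ev p (dx j (U2 i)) * ev p (U1 j - U2 j))
  - ev p R1 * (γ * ev p R1 ^ (γ - 2) * ev p (dx i (R1 - R2))
      + KK γ R1 R2 p * ev p (dx i R2) * ev p (R1 - R2))
  + ν * ∑ j, (ev p (SS U2 i j) * ev p (dx j (R1 - R2))
      - ev p (SS U2 i j) * ev p (dx j R2) / ev p R2 * ev p (R1 - R2))

lemma mom_diff (p : ℝ × V3) (h1 : 0 < ev p R1) (h2 : 0 < ev p R2)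
    (m1 : MomV ν κ γ R1 U1 p) (m2 : MomV ν κ γ R2 U2 p) (i : Fin 3) :
    ev p (R1 * (dt (U1 i - U2 i) + ∑ j, U1 j * dx j (U1 i - U2 i)))
    - ν * ev p (∑ j, (dx j R1 * (dx j (U1 i - U2 i) + dx i (U1 j - U2 j))
        + R1 * dx j (dx j (U1 i - U2 i) + dx i (U1 j - U2 j))))
    - 2 * κ ^ 2 * ev p (R1 * dx i (∑ j, dx j (dx j (R1 - R2)))) = St ν γ R1 R2 U1 U2 i p := by
  have e1 := m1 i
  have e2 := m2 i
  have hk : KK γ R1 R2 p * (ev p R1 - ev p R2)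
      = γ * ev p R1 ^ (γ - 2) - γ * ev p R2 ^ (γ - 2) := by
    unfold KK
    by_cases h : ev p R1 - ev p R2 = 0
    · have : ev p R1 = ev p R2 := by linarith
      simp [this]
    · field_simp
  simp only [St, SS, Fin.sum_univ_three, map_add, map_sub, ev_add, ev_sub, ev_mul] at *
  generalize KK γ R1 R2 p = K at *
  generalize γ * ev p R1 ^ (γ - 2) = P1 at *
  generalize γ * ev p R2 ^ (γ - 2) = P2 at *
  have hs1 : ev p R1 * (ev p R1)⁻¹ = 1 := mul_inv_cancel₀ h1.ne'
  have hs2 : ev p R2 * (ev p R2)⁻¹ = 1 := mul_inv_cancel₀ h2.ne'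
  simp only [div_eq_mul_inv] at *
  generalize (ev p R1)⁻¹ = s1 at *
  generalize (ev p R2)⁻¹ = s2 at *
  linear_combination (ev p R1) * e1 - (ev p R1) * e2 + ev p R1 * ev p (dx i R2) * hk
   + ν * (ev p (dx 0 R1) * (ev p (dx 0 (U1 i)) + ev p (dx i (U1 0)))
    + ev p (dx 1 R1) * (ev p (dx 1 (U1 i)) + ev p (dx i (U1 1)))
    + ev p (dx 2 R1) * (ev p (dx 2 (U1 i)) + ev p (dx i (U1 2)))) * hs1
   - ν * (ev p (dx 0 R2) * (ev p (dx 0 (U2 i)) + ev p (dx i (U2 0)))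
    + ev p (dx 1 R2) * (ev p (dx 1 (U2 i)) + ev p (dx i (U2 1)))
    + ev p (dx 2 R2) * (ev p (dx 2 (U2 i)) + ev p (dx i (U2 2)))) * hs2

def Rem (p : ℝ × V3) : ℝ :=
  (∑ i, ev p (U1 i - U2 i) * St ν γ R1 R2 U1 U2 i p)
  - κ ^ 2 * (2 * (∑ i, ∑ j, ev p (dx i (R1 - R2)) * ev p (dx j (R1 - R2)) * ev p (dx i (U2 j)))
    + (∑ i, ev p (dx i (R1 - R2)) * ev p (dx i (R1 - R2))) * (∑ j, ev p (dx j (U2 j)))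
    + 2 * ∑ i, ∑ j, ev p (R1 - R2) * ev p (dx i (R1 - R2)) * ev p (dx i (dx j (U2 j))))
  + ev p R1 * (∑ j, ev p (dx j (R1 - R2)) * ev p (U1 j - U2 j))
  - ev p (R1 - R2) * (∑ j, (ev p (dx j (R1 - R2)) * ev p (U2 j)
      + ev p (R1 - R2) * ev p (dx j (U2 j))))

def en : Sm :=
  (1/2 : ℝ) • (R1 * ∑ i, (U1 i - U2 i) * (U1 i - U2 i))
  + κ ^ 2 • (∑ i, dx i (R1 - R2) * dx i (R1 - R2)) + (1/2 : ℝ) • ((R1 - R2) * (R1 - R2))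

def fl (j : Fin 3) : Sm :=
  -((1/2 : ℝ) • (R1 * U1 j * ∑ i, (U1 i - U2 i) * (U1 i - U2 i)))
  + ν • (R1 * ∑ i, (U1 i - U2 i) * (dx j (U1 i - U2 i) + dx i (U1 j - U2 j)))
  + (2 * κ ^ 2) • (R1 * (U1 j - U2 j) * (∑ k, dx k (dx k (R1 - R2)))
      - dx j (R1 - R2) * (∑ k, dx k (R1 * (U1 k - U2 k))))
  - κ ^ 2 • ((∑ i, dx i (R1 - R2) * dx i (R1 - R2)) * U2 j)
  - (R1 - R2) * R1 * (U1 j - U2 j)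

lemma balance (t : ℝ)
    (h1 : ∀ x, 0 < ev (t, x) R1) (h2 : ∀ x, 0 < ev (t, x) R2)
    (c1 : ∀ x, ev (t, x) (dt R1 + ∑ j, dx j (R1 * U1 j)) = 0)
    (c2 : ∀ x, ev (t, x) (dt R2 + ∑ j, dx j (R2 * U2 j)) = 0)
    (m1 : ∀ x, MomV ν κ γ R1 U1 (t, x)) (m2 : ∀ x, MomV ν κ γ R2 U2 (t, x)) (x : V3) :
    ev (t, x) (dt (en κ R1 R2 U1 U2)) = ev (t, x) (∑ j, dx j (fl ν κ R1 R2 U1 U2 j))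
      - ν / 2 * (ev (t, x) R1 * ∑ i, ∑ j,
          ev (t, x) (dx j (U1 i - U2 i) + dx i (U1 j - U2 j)) ^ 2)
      + Rem ν κ γ R1 R2 U1 U2 (t, x) := by
  have cr : ∀ y, ev (t, y) (dt (R1 - R2)) = ev (t, y) (-(∑ k, dx k (R1 * (U1 k - U2 k)))
      - ∑ k, dx k ((R1 - R2) * U2 k)) := by
    intro y
    have a1 := c1 y
    have a2 := c2 y
    simp only [Fin.sum_univ_three, map_sub, Derivation.leibniz, smul_eq_mul, ev_add, ev_sub,
      ev_neg, ev_mul] at *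
    linear_combination a1 - a2
  have crx := fun i => dx_congr _ _ t cr i x
  have crp := cr x
  have hm := fun i => mom_diff ν κ γ R1 R2 U1 U2 (t, x) (h1 x) (h2 x) (m1 x) (m2 x) i
  have hc1 := c1 x
  have J1 := congrArg (ev (t, x)) (I1 R1 U1 (fun i => U1 i - U2 i))
  have J2 := congrArg (ev (t, x)) (I2 R1 (fun i => U1 i - U2 i))
  have J3 := congrArg (ev (t, x)) (I3 R1 (R1 - R2) (fun i => U1 i - U2 i) _ _ rfl rfl)
  have J5 := congrArg (ev (t, x)) (I5 (R1 - R2))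
  have J5b := congrArg (ev (t, x)) (I5b (R1 - R2) U2)
  have J6 := congrArg (ev (t, x)) (I6 R1 (R1 - R2) (fun i => U1 i - U2 i))
  have J7 := congrArg (ev (t, x)) (I7 (R1 - R2))
  have hH : ev (t, x) (∑ j, dx j ((R1 - R2) * U2 j)) =
     ∑ j, (ev (t, x) (dx j (R1 - R2)) * ev (t, x) (U2 j)
      + ev (t, x) (R1 - R2) * ev (t, x) (dx j (U2 j))) := by
    simp only [Fin.sum_univ_three, Derivation.leibniz, smul_eq_mul, ev_add, ev_mul]
    ring
  have hF : ev (t, x) (∑ j, dx j (fl ν κ R1 R2 U1 U2 j)) = _ :=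
    congrArg (ev (t, x)) (flux_lin ν κ _ _ _ _ _)
  rw [hF]
  generalize hp : ((t, x) : ℝ × V3) = p at *
  have hE : ev p (dt (en κ R1 R2 U1 U2)) =
      1 / 2 * ev p (dt (R1 * ∑ i, (U1 i - U2 i) * (U1 i - U2 i)))
      + κ ^ 2 * ev p (dt (∑ i, dx i (R1 - R2) * dx i (R1 - R2)))
      + 1 / 2 * ev p (dt ((R1 - R2) * (R1 - R2))) := by
    unfold en
    rw [map_add, map_add, Derivation.map_smul, Derivation.map_smul, Derivation.map_smul]
    rfl
  rw [hE]
  unfold Rem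
  rw [← hH]
  simp only [← hm]
  have hcx : ∀ i, ev p (dx i (dt (R1 - R2))) = - ev p (dx i (∑ k, dx k (R1 * (U1 k - U2 k))))
      - ev p (dx i (∑ k, dx k ((R1 - R2) * U2 k))) := by
    intro i
    rw [crx i, map_sub, map_neg]
    rfl
  have hcp : ev p (dt (R1 - R2)) = - ev p (∑ k, dx k (R1 * (U1 k - U2 k)))
      - ev p (∑ k, dx k ((R1 - R2) * U2 k)) := crp
  rw [ev_add, ev_add p (_ * _), ev_mul p (dt R1 + ∑ j, dx j (R1 * U1 j)), hc1, zero_mul, zero_add] at J1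
  generalize (∑ k, dx k (R1 * (U1 k - U2 k))) = G at *
  generalize (∑ k, dx k ((R1 - R2) * U2 k)) = H at *
  generalize (∑ j, dx j (dx j (R1 - R2))) = L at *
  clear hF hE crx crp cr c1 c2 m1 m2 hm hH hc1
  simp only [ev_add, ev_sub, ev_neg, ev_smul, ev_mul, ev_two, ev_pow, ev_sum] at *
  simp only [hcx, hcp] at *
  simp only [Fin.sum_univ_three] at *
  linear_combination (1 / 2) * J1 - (ν / 2) * J2 - 2 * κ ^ 2 * J3 + κ ^ 2 * J5 + κ ^ 2 * J5b
    + J6 + (1 / 2) * J7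
end core

section core2
variable (ν κ γ : ℝ) (R1 R2 : Sm) (U1 U2 : Fin 3 → Sm)

def NN (p : ℝ × V3) : ℝ :=
  (∑ i, ev p (U1 i - U2 i) ^ 2) + (∑ i, ev p (dx i (R1 - R2)) ^ 2) + ev p (R1 - R2) ^ 2

lemma NN_nonneg (p : ℝ × V3) : 0 ≤ NN R1 R2 U1 U2 p := by
  unfold NN
  positivity

lemma sqrt_bigO (l : Filter (ℝ × V3)) (f N : ℝ × V3 → ℝ) (h : ∀ p, f p ^ 2 ≤ N p) :
    f =O[l] (fun p => Real.sqrt (N p)) := by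
  refine IsBigO.of_bound 1 (Eventually.of_forall fun p => ?_)
  rw [one_mul, Real.norm_eq_abs, Real.norm_eq_abs, abs_of_nonneg (Real.sqrt_nonneg _)]
  exact Real.abs_le_sqrt (h p)

lemma sum_bigO {l : Filter (ℝ × V3)} {f : Fin 3 → ℝ × V3 → ℝ} {n : ℝ × V3 → ℝ}
    (h : ∀ i, f i =O[l] n) : (fun p => ∑ i, f i p) =O[l] n := by
  simp only [Fin.sum_univ_three]
  exact ((h 0).add (h 1)).add (h 2)

lemma rem_bigO (T c : ℝ) (hc : 0 < c) (K : Set (ℝ × V3)) (hK : IsCompact K)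
    (h1 : ∀ p ∈ K, c ≤ ev p R1) (h2 : ∀ p ∈ K, c ≤ ev p R2) :
    (Rem ν κ γ R1 R2 U1 U2) =O[𝓟 K] (NN R1 R2 U1 U2) := by
  set n : ℝ × V3 → ℝ := fun p => Real.sqrt (NN R1 R2 U1 U2 p) with hn
  have hnn : (fun p => n p * n p) = NN R1 R2 U1 U2 := by
    funext p
    exact Real.mul_self_sqrt (NN_nonneg _ _ _ _ _)
  have hS := fun f : Sm => bigO_one K hK f
  have hw : ∀ i, (fun p => ev p (U1 i - U2 i)) =O[𝓟 K] n := by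
    intro i
    refine sqrt_bigO _ _ _ fun p => ?_
    have := Finset.single_le_sum (f := fun i => ev p (U1 i - U2 i) ^ 2)
      (fun i _ => sq_nonneg _) (Finset.mem_univ i)
    have h3 : 0 ≤ ∑ i, ev p (dx i (R1 - R2)) ^ 2 := Finset.sum_nonneg fun i _ => sq_nonneg _
    unfold NN
    nlinarith [sq_nonneg (ev p (R1 - R2))]
  have hq : ∀ i, (fun p => ev p (dx i (R1 - R2))) =O[𝓟 K] n := by
    intro i
    refine sqrt_bigO _ _ _ fun p => ?_
    have := Finset.single_le_sum (f := fun i => ev p (dx i (R1 - R2)) ^ 2)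
      (fun i _ => sq_nonneg _) (Finset.mem_univ i)
    have h3 : 0 ≤ ∑ i, ev p (U1 i - U2 i) ^ 2 := Finset.sum_nonneg fun i _ => sq_nonneg _
    unfold NN
    nlinarith [sq_nonneg (ev p (R1 - R2))]
  have hr : (fun p => ev p (R1 - R2)) =O[𝓟 K] n := by
    refine sqrt_bigO _ _ _ fun p => ?_
    have h3 : 0 ≤ ∑ i, ev p (U1 i - U2 i) ^ 2 := Finset.sum_nonneg fun i _ => sq_nonneg _
    have h4 : 0 ≤ ∑ i, ev p (dx i (R1 - R2)) ^ 2 := Finset.sum_nonneg fun i _ => sq_nonneg _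
    unfold NN
    linarith
  have hP : (fun p => γ * ev p R1 ^ (γ - 2)) =O[𝓟 K] (fun _ => (1 : ℝ)) := by
    have hcont : ContinuousOn (fun p => γ * ev p R1 ^ (γ - 2)) K := by
      apply ContinuousOn.mul continuousOn_const
      apply ContinuousOn.rpow_const (Sm_cont R1).continuousOn
      intro p hp
      exact Or.inl (lt_of_lt_of_le hc (h1 p hp)).ne'
    obtain ⟨M, hM⟩ := hK.exists_bound_of_continuousOn hcont
    rw [isBigO_principal]
    exact ⟨M, fun p hp => by simpa using hM p hp⟩
  have hI : (fun p => (ev p R2)⁻¹) =O[𝓟 K] (fun _ => (1 : ℝ)) := by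
    rw [isBigO_principal]
    refine ⟨c⁻¹, fun p hp => ?_⟩
    have := lt_of_lt_of_le hc (h2 p hp)
    rw [Real.norm_eq_abs, abs_of_pos (inv_pos.2 this), norm_one, mul_one]
    exact inv_anti₀ hc (h2 p hp)
  have hKK : (KK γ R1 R2) =O[𝓟 K] (fun _ => (1 : ℝ)) := by
    obtain ⟨M1, hM1⟩ := isBigO_principal.1 (hS R1)
    obtain ⟨M2, hM2⟩ := isBigO_principal.1 (hS R2)
    simp only [norm_one, mul_one, Real.norm_eq_abs] at hM1 hM2
    obtain ⟨B, hB⟩ := pow_lip γ c (max M1 M2) hc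
    rw [isBigO_principal]
    refine ⟨max B 0, fun p hp => ?_⟩
    have a1 := (le_abs_self _).trans (hM1 p hp)
    have a2 := (le_abs_self _).trans (hM2 p hp)
    have := hB (ev p R1) ⟨h1 p hp, a1.trans (le_max_left _ _)⟩ (ev p R2)
      ⟨h2 p hp, a2.trans (le_max_right _ _)⟩
    rw [norm_one, mul_one, Real.norm_eq_abs, KK, abs_div]
    refine div_le_of_le_mul₀ (abs_nonneg _) (le_max_right _ _) (this.trans ?_)
    exact mul_le_mul_of_nonneg_right (le_max_left _ _) (abs_nonneg _)
  have hSt : ∀ i, (St ν γ R1 R2 U1 U2 i) =O[𝓟 K] n := by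
    intro i
    refine IsBigO.add (IsBigO.sub (IsBigO.neg_left ?_) ?_) ?_
    · exact one_mul_bigO (hS R1) (sum_bigO fun j => one_mul_bigO (hS _) (hw j))
    · refine one_mul_bigO (hS R1) (IsBigO.add (one_mul_bigO hP (hq i)) ?_)
      exact one_mul_bigO (one_mul_bigO hKK (hS _)) hr
    · refine IsBigO.const_mul_left (sum_bigO fun j => ?_) ν
      refine IsBigO.sub (one_mul_bigO (hS _) (hq j)) ?_
      simp only [div_eq_mul_inv]
      exact one_mul_bigO (one_mul_bigO (one_mul_bigO (hS _) (hS _)) hI) hr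
  rw [← hnn]
  have hs2 : ∀ f : Fin 3 → Sm, (fun p => ∑ j, ev p (f j)) =O[𝓟 K] (fun _ => (1 : ℝ)) :=
    fun f => sum_bigO fun j => hS _
  refine IsBigO.sub (IsBigO.add (IsBigO.sub ?_ ?_) ?_) ?_
  · exact sum_bigO fun i => (hw i).mul (hSt i)
  · refine IsBigO.const_mul_left (IsBigO.add (IsBigO.add ?_ ?_) ?_) _
    · refine IsBigO.const_mul_left (sum_bigO fun i => sum_bigO fun j => ?_) _
      exact mul_one_bigO ((hq i).mul (hq j)) (hS _)
    · exact mul_one_bigO (sum_bigO fun i => (hq i).mul (hq i)) (hs2 _)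
    · refine IsBigO.const_mul_left (sum_bigO fun i => sum_bigO fun j => ?_) _
      exact mul_one_bigO (hr.mul (hq i)) (hS _)
  · exact one_mul_bigO (hS R1) (sum_bigO fun j => (hq j).mul (hw j))
  · refine hr.mul (sum_bigO fun j => IsBigO.add ?_ ?_)
    · exact mul_one_bigO (hq j) (hS _)
    · exact mul_one_bigO hr (hS _)

lemma en_eval (p : ℝ × V3) : ev p (en κ R1 R2 U1 U2) =
    1 / 2 * (ev p R1 * ∑ i, ev p (U1 i - U2 i) ^ 2) + κ ^ 2 * (∑ i, ev p (dx i (R1 - R2)) ^ 2)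
    + 1 / 2 * ev p (R1 - R2) ^ 2 := by
  simp only [en, ev_add, ev_smul, ev_mul, ev_sum, pow_two]

lemma core (T c : ℝ) (hν : 0 < ν) (hκ : 0 < κ) (hT : 0 < T) (hc : 0 < c)
    (h1 : ∀ t ∈ Set.Icc 0 T, ∀ x, c ≤ ev (t, x) R1)
    (h2 : ∀ t ∈ Set.Icc 0 T, ∀ x, c ≤ ev (t, x) R2)
    (c1 : ∀ t ∈ Set.Ioo 0 T, ∀ x, ev (t, x) (dt R1 + ∑ j, dx j (R1 * U1 j)) = 0)
    (c2 : ∀ t ∈ Set.Ioo 0 T, ∀ x, ev (t, x) (dt R2 + ∑ j, dx j (R2 * U2 j)) = 0)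
    (m1 : ∀ t ∈ Set.Ioo 0 T, ∀ x, MomV ν κ γ R1 U1 (t, x))
    (m2 : ∀ t ∈ Set.Ioo 0 T, ∀ x, MomV ν κ γ R2 U2 (t, x))
    (i1 : ∀ x, ev (0, x) R1 = ev (0, x) R2)
    (i2 : ∀ i x, ev (0, x) (U1 i) = ev (0, x) (U2 i)) :
    ∀ t ∈ Set.Icc 0 T, ∀ x ∈ Set.Icc (0 : V3) 1,
      ev (t, x) R1 = ev (t, x) R2 ∧ ∀ i, ev (t, x) (U1 i) = ev (t, x) (U2 i) := by
  set K : Set (ℝ × V3) := Set.Icc 0 T ×ˢ Set.Icc (0 : V3) 1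
  have hK : IsCompact K := isCompact_Icc.prod isCompact_Icc
  obtain ⟨C0, hC0⟩ := isBigO_principal.1 (rem_bigO ν κ γ R1 R2 U1 U2 T c hc K hK
    (fun p hp => h1 p.1 hp.1 p.2) (fun p hp => h2 p.1 hp.1 p.2))
  set m := min (c / 2) (min (κ ^ 2) (1 / 2)) with hm
  have hmpos : 0 < m := by
    refine lt_min (by linarith) (lt_min (by positivity) (by norm_num))
  have hme : ∀ t ∈ Set.Icc 0 T, ∀ x,
      m * NN R1 R2 U1 U2 (t, x) ≤ ev (t, x) (en κ R1 R2 U1 U2) := by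
    intro t ht x
    have b1 : m ≤ c / 2 := min_le_left _ _
    have b2 : m ≤ κ ^ 2 := (min_le_right _ _).trans (min_le_left _ _)
    have b3 : m ≤ 1 / 2 := (min_le_right _ _).trans (min_le_right _ _)
    have b4 := h1 t ht x
    rw [en_eval, NN]
    have h3 : 0 ≤ ∑ i, ev (t, x) (U1 i - U2 i) ^ 2 := Finset.sum_nonneg fun i _ => sq_nonneg _
    have h4 : 0 ≤ ∑ i, ev (t, x) (dx i (R1 - R2)) ^ 2 := Finset.sum_nonneg fun i _ => sq_nonneg _
    have h5 := sq_nonneg (ev (t, x) (R1 - R2))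
    have k1 := mul_le_mul_of_nonneg_right (b1.trans (by linarith : c / 2 ≤ ev (t, x) R1 / 2)) h3
    have k2 := mul_le_mul_of_nonneg_right b2 h4
    have k3 := mul_le_mul_of_nonneg_right b3 h5
    linarith
  have key := energy_zero T (|C0| / m) hT (en κ R1 R2 U1 U2) (fl ν κ R1 R2 U1 U2)
    (fun t ht x => (mul_nonneg hmpos.le (NN_nonneg _ _ _ _ _)).trans (hme t ht x))
    (by
      intro x
      have hr : ∀ x, ev (0, x) (R1 - R2) = ev (0, x) 0 := by
        intro x
        rw [ev_sub, i1]; simp [ev]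
      have hz : ev (0, x) 0 = 0 := rfl
      change ev (0, x) _ = 0
      rw [en_eval]
      have : ∀ i, ev (0, x) (dx i (R1 - R2)) = 0 := by
        intro i
        rw [dx_congr _ _ 0 hr, map_zero]; rfl
      simp only [this, hr, hz]
      simp [ev_sub, i2])
    (by
      intro t ht x hx
      have ht' : t ∈ Set.Icc 0 T := Set.Ioo_subset_Icc_self ht
      have hb := balance ν κ γ R1 R2 U1 U2 t (fun x => hc.trans_le (h1 t ht' x))
        (fun x => hc.trans_le (h2 t ht' x)) (c1 t ht) (c2 t ht) (m1 t ht) (m2 t ht) x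
      have hrem := hC0 (t, x) ⟨ht', hx⟩
      rw [Real.norm_eq_abs, Real.norm_eq_abs, abs_of_nonneg (NN_nonneg _ _ _ _ _)] at hrem
      have hrem2 := (le_abs_self _).trans hrem
      have hN := NN_nonneg R1 R2 U1 U2 (t, x)
      have hrem3 := mul_le_mul_of_nonneg_right (le_abs_self C0) hN
      have hrem4 : |C0| * NN R1 R2 U1 U2 (t, x) ≤ |C0| / m * ev (t, x) (en κ R1 R2 U1 U2) := by
        have := mul_le_mul_of_nonneg_left (hme t ht' x) (div_nonneg (abs_nonneg C0) hmpos.le)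
        rwa [← mul_assoc, div_mul_cancel₀ _ hmpos.ne'] at this
      have hpos : 0 ≤ ν / 2 * (ev (t, x) R1 * ∑ i, ∑ j,
          ev (t, x) (dx j (U1 i - U2 i) + dx i (U1 j - U2 j)) ^ 2) := by
        have := hc.trans_le (h1 t ht' x)
        positivity
      change ev (t, x) _ ≤ ev (t, x) _ + _ * ev (t, x) _
      linarith)
  intro t ht x hx
  have hz : ev (t, x) (en κ R1 R2 U1 U2) = 0 := key t ht x hx
  have hN : NN R1 R2 U1 U2 (t, x) ≤ 0 := by
    have := hme t ht x
    rw [hz] at this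
    exact nonpos_of_mul_nonpos_right this hmpos
  unfold NN at hN
  have h3 : 0 ≤ ∑ i, ev (t, x) (U1 i - U2 i) ^ 2 := Finset.sum_nonneg fun i _ => sq_nonneg _
  have h4 : 0 ≤ ∑ i, ev (t, x) (dx i (R1 - R2)) ^ 2 := Finset.sum_nonneg fun i _ => sq_nonneg _
  have h5 := sq_nonneg (ev (t, x) (R1 - R2))
  constructor
  · have : ev (t, x) (R1 - R2) ^ 2 = 0 := by linarith
    have := pow_eq_zero_iff (two_ne_zero) |>.1 this
    rw [ev_sub] at this
    linarith
  · intro i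
    have h6 := Finset.single_le_sum (f := fun i => ev (t, x) (U1 i - U2 i) ^ 2)
      (fun i _ => sq_nonneg _) (Finset.mem_univ i)
    have : ev (t, x) (U1 i - U2 i) ^ 2 = 0 := le_antisymm (by linarith) (sq_nonneg _)
    have := pow_eq_zero_iff (two_ne_zero) |>.1 this
    rw [ev_sub] at this
    linarith
end core2

lemma conv_cont (R : Sm) (U : Fin 3 → Sm) (t : ℝ) (x : V3)
    (h : deriv (fun s => R.1 (s, x)) t + vdiv (fun y => R.1 (t, y) • (fun i => (U i).1 (t, y))) x = 0) :
    ev (t, x) (dt R + ∑ j, dx j (R * U j)) = 0 := by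
  rw [dt_deriv] at h
  rw [ev_add, ev_sum]
  have : ∀ j, ev (t, x) (dx j (R * U j)) = pd j (fun y => (R * U j).1 (t, y)) x :=
    fun j => (dx_pd _ _ _ _).symm
  simp only [this]
  exact h

lemma conv_mom (ν κ γ : ℝ) (R : Sm) (U : Fin 3 → Sm) (t : ℝ) (x : V3)
    (hpos : 0 < R.1 (t, x))
    (hc : ev (t, x) (dt R + ∑ j, dx j (R * U j)) = 0)
    (h : (fun i => deriv (fun s => R.1 (s, x) * (U i).1 (s, x)) t)
        + mdiv (fun y i j => R.1 (t, y) * (U i).1 (t, y) * (U j).1 (t, y)) x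
        + grad (fun y => R.1 (t, y) ^ γ) x
        - (2 * ν) • mdiv (fun y i j => R.1 (t, y) *
            symJ (fun y i => (U i).1 (t, y)) y i j) x
        - (2 * κ ^ 2) • (R.1 (t, x) • grad (fun y => lap (fun y => R.1 (t, y)) y) x)
      = 0) : MomV ν κ γ R U (t, x) := by
  intro i
  have hi := congrFun h i
  have a1 : deriv (fun s => R.1 (s, x) * (U i).1 (s, x)) t = ev (t, x) (dt (R * U i)) :=
    dt_deriv (R * U i) t x
  have a2 : mdiv (fun y i j => R.1 (t, y) * (U i).1 (t, y) * (U j).1 (t, y)) x i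
      = ∑ j, ev (t, x) (dx j (R * U i * U j)) := by
    unfold mdiv
    exact Finset.sum_congr rfl fun j _ => dx_pd j (R * U i * U j) t x
  have a3 : grad (fun y => R.1 (t, y) ^ γ) x i
      = γ * ev (t, x) R ^ (γ - 1) * ev (t, x) (dx i R) := by
    unfold grad pd
    have := (dx_hasFDerivAt R t x).rpow_const (p := γ) (Or.inl hpos.ne')
    rw [this.fderiv]
    simp [dx, dd_apply, ev]
  have a4 : mdiv (fun y i j => R.1 (t, y) * symJ (fun y i => (U i).1 (t, y)) y i j) x i
      = ∑ j, ev (t, x) (dx j (R * ((1/2 : ℝ) • SS U i j))) := by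
    unfold mdiv
    refine Finset.sum_congr rfl fun j _ => ?_
    rw [ev, ← dx_pd]
    congr 1
    funext y
    have : symJ (fun y i => (U i).1 (t, y)) y i j = ((1/2 : ℝ) • SS U i j).1 (t, y) := by
      unfold symJ jacb
      rw [dx_pd, dx_pd]
      change _ = 1 / 2 * ((dx j (U i)).1 (t, y) + (dx i (U j)).1 (t, y))
      ring
    exact congrArg (R.1 (t, y) * ·) this
  have a5 : grad (fun y => lap (fun y => R.1 (t, y)) y) x i
      = ev (t, x) (dx i (∑ j, dx j (dx j R))) := by
    unfold grad
    rw [ev, ← dx_pd]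
    congr 1
    funext y
    unfold lap
    simp only [dx_pd]
    exact (ev_sum (t, y) _).symm
  simp only [Pi.add_apply, Pi.sub_apply, Pi.smul_apply, smul_eq_mul, Pi.zero_apply] at hi
  rw [a1, a2, a3, a4, a5] at hi
  change _ + _ + _ - _ - _ * (ev (t, x) R * _) = _ at hi
  have hpos' : 0 < ev (t, x) R := hpos
  have hg : ev (t, x) R ^ (γ - 1) = ev (t, x) R ^ (γ - 2) * ev (t, x) R := by
    rw [← Real.rpow_add_one hpos'.ne']
    congr 1; ring
  rw [hg] at hi
  clear a1 a2 a3 a4 a5 h hpos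
  generalize (∑ j, dx j (dx j R)) = L at *
  generalize ev (t, x) R ^ (γ - 2) = P at *
  simp only [SS, Fin.sum_univ_three, map_add, Derivation.leibniz, Derivation.map_smul, smul_eq_mul,
    ev_add, ev_mul, ev_smul] at *
  apply mul_left_cancel₀ hpos'.ne'
  have hs : ev (t, x) R * (ev (t, x) R)⁻¹ = 1 := mul_inv_cancel₀ hpos'.ne'
  simp only [div_eq_mul_inv] at *
  generalize (ev (t, x) R)⁻¹ = s at *
  linear_combination hi - ev (t, x) (U i) * hc
   - ν * (ev (t, x) (dx 0 R) * (ev (t, x) (dx 0 (U i)) + ev (t, x) (dx i (U 0)))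
    + ev (t, x) (dx 1 R) * (ev (t, x) (dx 1 (U i)) + ev (t, x) (dx i (U 1)))
    + ev (t, x) (dx 2 R) * (ev (t, x) (dx 2 (U i)) + ev (t, x) (dx i (U 2)))) * hs

/-- weak-strong uniqueness, classical form: two smooth periodic
solutions of the Navier–Stokes–Korteweg system with densities bounded below by
`c > 0` and the same initial data coincide on `[0,T] × ℝ³`. -/
theorem weak_strong_uniqueness_capillary
    (ν κ γ T c : ℝ) (hν : 0 < ν) (hκ : 0 < κ) (hγ : 1 < γ) (hT : 0 < T) (hc : 0 < c)
    (ρ₁ ρ₂ : ℝ → V3 → ℝ) (u₁ u₂ : ℝ → V3 → V3)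
    (hρ₁ : ContDiff ℝ (⊤ : ℕ∞) (fun p : ℝ × V3 => ρ₁ p.1 p.2))
    (hρ₂ : ContDiff ℝ (⊤ : ℕ∞) (fun p : ℝ × V3 => ρ₂ p.1 p.2))
    (hu₁ : ContDiff ℝ (⊤ : ℕ∞) (fun p : ℝ × V3 => u₁ p.1 p.2))
    (hu₂ : ContDiff ℝ (⊤ : ℕ∞) (fun p : ℝ × V3 => u₂ p.1 p.2))
    (hρ₁per : ∀ t x (k : Fin 3 → ℤ), ρ₁ t (x + fun i => (k i : ℝ)) = ρ₁ t x)
    (hρ₂per : ∀ t x (k : Fin 3 → ℤ), ρ₂ t (x + fun i => (k i : ℝ)) = ρ₂ t x)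
    (hu₁per : ∀ t x (k : Fin 3 → ℤ), u₁ t (x + fun i => (k i : ℝ)) = u₁ t x)
    (hu₂per : ∀ t x (k : Fin 3 → ℤ), u₂ t (x + fun i => (k i : ℝ)) = u₂ t x)
    (hpos₁ : ∀ t ∈ Set.Icc (0 : ℝ) T, ∀ x, c ≤ ρ₁ t x)
    (hpos₂ : ∀ t ∈ Set.Icc (0 : ℝ) T, ∀ x, c ≤ ρ₂ t x)
    (hcont₁ : ∀ t ∈ Set.Ioo (0 : ℝ) T, ∀ x,
      deriv (fun s => ρ₁ s x) t + vdiv (fun y => ρ₁ t y • u₁ t y) x = 0)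
    (hcont₂ : ∀ t ∈ Set.Ioo (0 : ℝ) T, ∀ x,
      deriv (fun s => ρ₂ s x) t + vdiv (fun y => ρ₂ t y • u₂ t y) x = 0)
    (hmom₁ : ∀ t ∈ Set.Ioo (0 : ℝ) T, ∀ x,
      (fun i => deriv (fun s => ρ₁ s x * u₁ s x i) t)
        + mdiv (fun y i j => ρ₁ t y * u₁ t y i * u₁ t y j) x
        + grad (fun y => ρ₁ t y ^ γ) x
        - (2 * ν) • mdiv (fun y i j => ρ₁ t y * symJ (u₁ t) y i j) x
        - (2 * κ ^ 2) • (ρ₁ t x • grad (fun y => lap (ρ₁ t) y) x)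
      = 0)
    (hmom₂ : ∀ t ∈ Set.Ioo (0 : ℝ) T, ∀ x,
      (fun i => deriv (fun s => ρ₂ s x * u₂ s x i) t)
        + mdiv (fun y i j => ρ₂ t y * u₂ t y i * u₂ t y j) x
        + grad (fun y => ρ₂ t y ^ γ) x
        - (2 * ν) • mdiv (fun y i j => ρ₂ t y * symJ (u₂ t) y i j) x
        - (2 * κ ^ 2) • (ρ₂ t x • grad (fun y => lap (ρ₂ t) y) x)
      = 0)
    (hid_ρ : ∀ x, ρ₁ 0 x = ρ₂ 0 x)
    (hid_u : ∀ x, u₁ 0 x = u₂ 0 x) :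
    ∀ t ∈ Set.Icc (0 : ℝ) T, ∀ x, ρ₁ t x = ρ₂ t x ∧ u₁ t x = u₂ t x := by
  let R1 : Sm := ⟨fun p => ρ₁ p.1 p.2, hρ₁, fun t x k => hρ₁per t x k⟩
  let R2 : Sm := ⟨fun p => ρ₂ p.1 p.2, hρ₂, fun t x k => hρ₂per t x k⟩
  let U1 : Fin 3 → Sm := fun i => ⟨fun p => u₁ p.1 p.2 i, contDiff_pi.1 hu₁ i,
    fun t x k => congrFun (hu₁per t x k) i⟩
  let U2 : Fin 3 → Sm := fun i => ⟨fun p => u₂ p.1 p.2 i, contDiff_pi.1 hu₂ i,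
    fun t x k => congrFun (hu₂per t x k) i⟩
  have c1 : ∀ t ∈ Set.Ioo 0 T, ∀ x, ev (t, x) (dt R1 + ∑ j, dx j (R1 * U1 j)) = 0 :=
    fun t ht x => conv_cont R1 U1 t x (hcont₁ t ht x)
  have c2 : ∀ t ∈ Set.Ioo 0 T, ∀ x, ev (t, x) (dt R2 + ∑ j, dx j (R2 * U2 j)) = 0 :=
    fun t ht x => conv_cont R2 U2 t x (hcont₂ t ht x)
  have key := core ν κ γ R1 R2 U1 U2 T c hν hκ hT hc hpos₁ hpos₂ c1 c2
    (fun t ht x => conv_mom ν κ γ R1 U1 t x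
      (hc.trans_le (hpos₁ t (Set.Ioo_subset_Icc_self ht) x)) (c1 t ht x) (hmom₁ t ht x))
    (fun t ht x => conv_mom ν κ γ R2 U2 t x
      (hc.trans_le (hpos₂ t (Set.Ioo_subset_Icc_self ht) x)) (c2 t ht x) (hmom₂ t ht x))
    hid_ρ (fun i x => congrFun (hid_u x) i)
  intro t ht x
  have hy : (x + fun i => ((-⌊x i⌋ : ℤ) : ℝ)) ∈ Set.Icc (0 : V3) 1 := by
    constructor
    · intro i
      have := Int.floor_le (x i)
      simp only [Pi.zero_apply, Pi.add_apply, Int.cast_neg]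
      linarith
    · intro i
      have := Int.lt_floor_add_one (x i)
      simp only [Pi.one_apply, Pi.add_apply, Int.cast_neg]
      linarith
  obtain ⟨k1, k2⟩ := key t ht _ hy
  constructor
  · rw [← hρ₁per t x (fun i => -⌊x i⌋), ← hρ₂per t x (fun i => -⌊x i⌋)]
    exact k1
  · rw [← hu₁per t x (fun i => -⌊x i⌋), ← hu₂per t x (fun i => -⌊x i⌋)]
    exact funext k2
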